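/- Let g and ḡ be geodesically equivalent pseudo-Riemannian metrics on M and L = L(g,ḡ). Suppose K ⊂ ℂ is compact and f : K → ℂ is a function such that K, f, and L satisfy the admissibility assumptions, and assume in addition that 0 ∉ f(Spectrum L(x)) for every x ∈ M. Then the metrics (g_f)_{ij} = g_{iα} f(L)^α_j and (ḡ_f)_{ij} = ḡ_{iα} f(L)^α_j are also geodesically equivalent. -/

import Mathlib

open Matrix Polynomial Filter

noncomputable section

variable {ι : Type} [Fintype ι] [DecidableEq ι]

/-- Partial derivative of a real-valued function on `ι → ℝ` in the direction of the
`j`-th coordinate vector. -/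
def pd (j : ι) (F : (ι → ℝ) → ℝ) (x : ι → ℝ) : ℝ :=
  fderiv ℝ F x (Pi.single j 1)

/-- Christoffel symbols `Γ^i_{jk}` of a metric given in local coordinates as a
matrix-valued function. -/
def christoffel (g : (ι → ℝ) → Matrix ι ι ℝ) (x : ι → ℝ) (i j k : ι) : ℝ :=
  (1 / 2) * ∑ m, (g x)⁻¹ i m *
    (pd j (fun y => g y m k) x + pd k (fun y => g y m j) x - pd m (fun y => g y j k) x)

/-- A curve is a geodesic of `g` up to reparametrisation (an unparametrized geodesic):
`γ̈ + Γ(γ̇,γ̇) = α(t)·γ̇` for some function `α`. -/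
def IsPregeodesic (g : (ι → ℝ) → Matrix ι ι ℝ) (γ : ℝ → ι → ℝ) : Prop :=
  ∃ α : ℝ → ℝ, ∀ t : ℝ, ∀ i : ι,
    deriv (fun s => deriv (fun τ => γ τ i) s) t
      + ∑ j, ∑ k, christoffel g (γ t) i j k *
          deriv (fun τ => γ τ j) t * deriv (fun τ => γ τ k) t
      = α t * deriv (fun τ => γ τ i) t

/-- `g` is a pseudo-Riemannian metric (in local coordinates) on the set `U`. -/
structure IsMetricOn (g : (ι → ℝ) → Matrix ι ι ℝ) (U : Set (ι → ℝ)) : Prop where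
  smooth : ∀ i j, ContDiffOn ℝ (⊤ : ℕ∞) (fun x => g x i j) U
  symm : ∀ x ∈ U, (g x)ᵀ = g x
  nondeg : ∀ x ∈ U, IsUnit (g x).det

/-- Two metrics are geodesically equivalent on `U`: they have the same geodesics
considered as unparametrized curves. -/
def GeodEquiv (g gb : (ι → ℝ) → Matrix ι ι ℝ) (U : Set (ι → ℝ)) : Prop :=
  ∀ γ : ℝ → ι → ℝ, ContDiff ℝ (⊤ : ℕ∞) γ → (∀ t, γ t ∈ U) →
    (IsPregeodesic g γ ↔ IsPregeodesic gb γ)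

/-- The (1,1)-tensor `L(g,ḡ)^i_j = (det ḡ / det g)^{1/(n+1)} ḡ^{ik} g_{kj}`. -/
def Lten (g gb : (ι → ℝ) → Matrix ι ι ℝ) (x : ι → ℝ) : Matrix ι ι ℝ :=
  (((gb x).det / (g x).det) ^ ((1 : ℝ) / (Fintype.card ι + 1))) • ((gb x)⁻¹ * g x)

/-- An admissible factorisation `χ = χ₁·χ₂` of the characteristic polynomial of `L`:
both factors are monic of degree ≥ 1, have smooth coefficients, and have no common
complex root at any point of `U`. -/
structure AdmissibleFact (L : (ι → ℝ) → Matrix ι ι ℝ) (U : Set (ι → ℝ))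
    (chi1 chi2 : (ι → ℝ) → Polynomial ℝ) : Prop where
  factor : ∀ x ∈ U, (L x).charpoly = chi1 x * chi2 x
  monic1 : ∀ x ∈ U, (chi1 x).Monic
  monic2 : ∀ x ∈ U, (chi2 x).Monic
  deg1 : ∀ x ∈ U, 1 ≤ (chi1 x).natDegree
  deg2 : ∀ x ∈ U, 1 ≤ (chi2 x).natDegree
  smooth1 : ∀ k, ContDiffOn ℝ (⊤ : ℕ∞) (fun x => (chi1 x).coeff k) U
  smooth2 : ∀ k, ContDiffOn ℝ (⊤ : ℕ∞) (fun x => (chi2 x).coeff k) U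
  coprime : ∀ x ∈ U, ¬ ∃ z : ℂ, aeval z (chi1 x) = 0 ∧ aeval z (chi2 x) = 0

/-- The distribution `D = ker χ(L)`. -/
def Dker (L : (ι → ℝ) → Matrix ι ι ℝ) (chi : (ι → ℝ) → Polynomial ℝ) (x : ι → ℝ) :
    Submodule ℝ (ι → ℝ) :=
  LinearMap.ker (Matrix.mulVecLin (aeval (L x) (chi x)))

/-- A distribution on `U` is integrable (involutive, which is equivalent by the
Frobenius theorem): the Lie bracket of any two smooth vector fields tangent to the
distribution is again tangent to it. -/
def IsIntegrableDist (U : Set (ι → ℝ)) (D : (ι → ℝ) → Submodule ℝ (ι → ℝ)) : Prop :=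
  ∀ u v : (ι → ℝ) → ι → ℝ, ContDiffOn ℝ (⊤ : ℕ∞) u U → ContDiffOn ℝ (⊤ : ℕ∞) v U →
    (∀ x ∈ U, u x ∈ D x) → (∀ x ∈ U, v x ∈ D x) →
    ∀ x ∈ U, (fderiv ℝ v x (u x) - fderiv ℝ u x (v x)) ∈ D x

/-- The assumptions (i)–(iv) of Section 1.3 on the compact set `K` and the function
`f : K → ℂ` (the condition on the spectrum of `L` is stated separately). -/
structure AdmissibleFun (K : Set ℂ) (f : ℂ → ℂ) : Prop where
  compact : IsCompact K
  conn : IsConnected Kᶜ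
  cont : ContinuousOn f K
  holo : DifferentiableOn ℂ f (interior K)
  symmK : ∀ z ∈ K, (starRingEnd ℂ) z ∈ K
  symmf : ∀ z ∈ K, f ((starRingEnd ℂ) z) = (starRingEnd ℂ) (f z)

/-- Assumption (v): the (complex) spectrum of `L(x)` lies in the interior of `K` for
every `x ∈ U`. -/
def SpectrumIn {ι : Type} [Fintype ι] [DecidableEq ι]
    (L : (ι → ℝ) → Matrix ι ι ℝ) (U : Set (ι → ℝ)) (K : Set ℂ) : Prop :=
  ∀ x ∈ U, spectrum ℂ ((L x).map (algebraMap ℝ ℂ)) ⊆ interior K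

/-- `FL` represents the (1,1)-tensor `f(L)`: it is the limit of `pᵢ(L)` for a sequence
of real polynomials `pᵢ` converging to `f` uniformly on `K` (such a sequence exists by
Mergelyan's theorem, and the limit does not depend on its choice). -/
def RepFunOfL {ι : Type} [Fintype ι] [DecidableEq ι]
    (L : (ι → ℝ) → Matrix ι ι ℝ) (U : Set (ι → ℝ)) (K : Set ℂ) (f : ℂ → ℂ)
    (FL : (ι → ℝ) → Matrix ι ι ℝ) : Prop :=
  ∃ p : ℕ → Polynomial ℝ,
    TendstoUniformlyOn (fun m z => aeval z (p m)) f atTop K ∧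
    ∀ x ∈ U, ∀ i j, Tendsto (fun m => aeval (L x) (p m) i j) atTop (nhds (FL x i j))

/-
Two metrics are geodesically equivalent if and only if their Levi-Civita connections differ by a
projective change `φ_k δ^i_j + δ^i_k φ_j` (Weyl): through every point and in every direction there
is a geodesic, and a quadratic map sending each vector to a multiple of itself has this form.
It therefore suffices to show that multiplication by `f(L)` adds one and the same tensor to the
connections of `g` and `ḡ`.

Connections at `x` only see the 1-jet of `f(L)` at `x`. Let `P` be the characteristic polynomial of
`L(x)`, whose roots lie in the interior of `K`. Dividing the approximating polynomials by `P²`, the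
remainders converge to a polynomial `q`, the quotients stay bounded near `L(x)`, and `P²` vanishes
to second order there; hence `f(L)` and `q(L)` have the same 1-jet at `x`.

For a polynomial, projective equivalence gives `∇_k L^i_j = λ^i g_{kj} + δ^i_k λ_j`. The first
summand is `λ ⊗ g_k`, and its adjoint with respect to `g` is the second one. Since `L` is
`g`-self-adjoint, `∇_k q(L)` is likewise the sum of `D_k`, the derivative of `q` at `L` in the
direction `λ ⊗ g_k`, and its adjoint. As `D_k` is symmetric in its two lower indices, adding
`q(L)⁻¹ D_k` to the connection of `g` gives the torsion-free connection compatible with `g q(L)`.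
The covariant derivative of `L` with respect to `ḡ` has the same first summand `λ ⊗ g_k`, now plus
its `ḡ`-adjoint, so the connection of `ḡ` changes by the same tensor.
-/

section PolynomialDivision

theorem norm_eval_divByMonic_X_sub_C_le {K : Set ℂ} {ρ M : ℝ} (hρ : 0 < ρ) {a : ℂ}
    (ha : Metric.closedBall a ρ ⊆ K) {p : ℂ[X]} (hp : ∀ z ∈ K, ‖p.eval z‖ ≤ M) :
    ∀ z ∈ K, ‖(p /ₘ (X - C a)).eval z‖ ≤ 2 / ρ * M := by
  set q := p /ₘ (X - C a)
  have hdecomp : ∀ z, p.eval z - p.eval a = (z - a) * q.eval z := by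
    intro z
    have h := congrArg (eval z) (modByMonic_add_div p (X - C a))
    simp only [modByMonic_X_sub_C_eq_C_eval, eval_add, eval_C, eval_mul, eval_sub, eval_X] at h
    linear_combination -h
  have hfar : ∀ z ∈ K, ρ ≤ ‖z - a‖ → ‖q.eval z‖ ≤ 2 / ρ * M := by
    intro z hz hza
    have h1 : ‖z - a‖ * ‖q.eval z‖ ≤ 2 * M := by
      rw [← norm_mul, ← hdecomp]
      have := hp a (ha (Metric.mem_closedBall_self hρ.le))
      linarith [norm_sub_le (p.eval z) (p.eval a), hp z hz]
    rw [div_mul_eq_mul_div, le_div_iff₀ hρ]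
    nlinarith [norm_nonneg (q.eval z)]
  intro z hz
  rcases le_or_gt ρ ‖z - a‖ with h | h
  · exact hfar z hz h
  -- Inside the disc the quotient is controlled by its values on the boundary circle.
  · refine Complex.norm_le_of_forall_mem_frontier_norm_le (U := Metric.ball a ρ)
      Metric.isBounded_ball (f := fun w => q.eval w) q.differentiable.diffContOnCl ?_
      (subset_closure (by simpa [dist_eq_norm] using h))
    intro w hw
    rw [frontier_ball a hρ.ne', mem_sphere_iff_norm] at hw
    exact hfar w (ha (by simp [dist_eq_norm, hw])) hw.ge

theorem div_modByMonic_X_sub_C_mul {R : Type*} [CommRing R] (a : R) {P : R[X]} (hP : P.Monic)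
    (p : R[X]) :
    p /ₘ ((X - C a) * P) = (p /ₘ (X - C a)) /ₘ P ∧
      p %ₘ ((X - C a) * P) = C (p.eval a) + (X - C a) * ((p /ₘ (X - C a)) %ₘ P) := by
  nontriviality R
  refine div_modByMonic_unique _ _ ((monic_X_sub_C a).mul hP) ⟨?_, ?_⟩
  · have hp := modByMonic_add_div p (X - C a)
    have hq := modByMonic_add_div (p /ₘ (X - C a)) P
    rw [modByMonic_X_sub_C_eq_C_eval] at hp
    linear_combination hp + (X - C a) * hq
  · have hdeg : ((X - C a) * P).degree = 1 + P.degree := by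
      rw [hP.degree_mul, degree_X_sub_C]
    refine (degree_add_le _ _).trans_lt (max_lt (degree_C_le.trans_lt ?_) ?_)
    · rw [hdeg, degree_eq_natDegree hP.ne_zero]
      have : 0 < 1 + P.natDegree := by omega
      exact_mod_cast this
    · rw [hdeg, mul_comm, (monic_X_sub_C a).degree_mul, degree_X_sub_C, add_comm]
      exact WithBot.add_lt_add_left WithBot.one_ne_bot (degree_modByMonic_lt _ hP)

theorem sub_divByMonic {R : Type*} [CommRing R] {P : R[X]} (hP : P.Monic) (p q : R[X]) :
    (p - q) /ₘ P = p /ₘ P - q /ₘ P := by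
  nontriviality R
  refine (div_modByMonic_unique _ (p %ₘ P - q %ₘ P) hP ⟨?_, ?_⟩).1
  · linear_combination modByMonic_add_div p P - modByMonic_add_div q P
  · rw [← sub_modByMonic]
    exact degree_modByMonic_lt _ hP

theorem norm_coeff_C_add_X_sub_C_mul_le (a c : ℂ) {r : ℂ[X]} {M : ℝ}
    (hr : ∀ k, ‖r.coeff k‖ ≤ M) (k : ℕ) :
    ‖(C c + (X - C a) * r).coeff k‖ ≤ ‖c‖ + (1 + ‖a‖) * M := by
  have hM : 0 ≤ M := (norm_nonneg _).trans (hr 0)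
  have hC : ‖(C c).coeff k‖ ≤ ‖c‖ := by
    rw [coeff_C]
    split_ifs <;> simp
  have hX : ‖(X * r).coeff k‖ ≤ M := by
    cases k with
    | zero => simpa using hM
    | succ k => simpa using hr k
  calc ‖(C c + (X - C a) * r).coeff k‖
      = ‖(C c).coeff k + ((X * r).coeff k - a * r.coeff k)‖ := by
        rw [sub_mul, coeff_add, coeff_sub, coeff_C_mul]
    _ ≤ ‖c‖ + (M + ‖a‖ * M) := by
        refine norm_add_le_of_le hC (norm_sub_le_of_le hX ?_)
        rw [norm_mul]
        gcongr
        exact hr k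
    _ = ‖c‖ + (1 + ‖a‖) * M := by ring

theorem exists_bound_divByMonic_prod_X_sub_C {K : Set ℂ} (s : Multiset ℂ)
    (hs : ∀ a ∈ s, a ∈ interior K) :
    ∃ D : ℝ, 0 ≤ D ∧ ∀ (p : ℂ[X]) (M : ℝ), 0 ≤ M → (∀ z ∈ K, ‖p.eval z‖ ≤ M) →
      (∀ z ∈ K, ‖(p /ₘ (s.map fun a => X - C a).prod).eval z‖ ≤ D * M) ∧
        ∀ k, ‖(p %ₘ (s.map fun a => X - C a).prod).coeff k‖ ≤ D * M := by
  induction s using Multiset.induction_on with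
  | empty =>
    refine ⟨1, zero_le_one, fun p M hM hp => ?_⟩
    simpa [hM] using hp
  | cons a s ih =>
    obtain ⟨D, hD, ih⟩ := ih fun b hb => hs b (Multiset.mem_cons_of_mem hb)
    obtain ⟨ρ, hρ, hρK⟩ := Metric.nhds_basis_closedBall.mem_iff.mp
      (mem_interior_iff_mem_nhds.mp (hs a (Multiset.mem_cons_self a s)))
    refine ⟨1 + (1 + ‖a‖) * (D * (2 / ρ)), by positivity, fun p M hM hp => ?_⟩
    obtain ⟨hquot, hrem⟩ := ih _ (2 / ρ * M) (by positivity)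
      (norm_eval_divByMonic_X_sub_C_le hρ hρK hp)
    obtain ⟨hq, hr⟩ := div_modByMonic_X_sub_C_mul a
      (monic_multiset_prod_of_monic s (fun a => X - C a) fun b _ => monic_X_sub_C b) p
    rw [Multiset.map_cons, Multiset.prod_cons, hq, hr]
    refine ⟨fun z hz => (hquot z hz).trans ?_, fun k =>
      (norm_coeff_C_add_X_sub_C_mul_le a _ hrem k).trans ?_⟩
    · have : 0 ≤ M + ‖a‖ * (D * (2 / ρ)) * M := by positivity
      linarith
    · have := hp a (hρK (Metric.mem_closedBall_self hρ.le))
      linarith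

theorem exists_bound_divByMonic {K : Set ℂ} {P : ℝ[X]} (hP : P.Monic)
    (hroots : ∀ z : ℂ, aeval z P = 0 → z ∈ interior K) :
    ∃ D : ℝ, 0 ≤ D ∧ ∀ (p : ℝ[X]) (M : ℝ), 0 ≤ M → (∀ z ∈ K, ‖aeval z p‖ ≤ M) →
      (∀ z ∈ K, ‖aeval z (p /ₘ P)‖ ≤ D * M) ∧ ∀ k, ‖(p %ₘ P).coeff k‖ ≤ D * M := by
  let φ := algebraMap ℝ ℂ
  have hsplit : P.map φ = ((P.map φ).roots.map fun a => X - C a).prod :=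
    (IsAlgClosed.splits _).eq_prod_roots_of_monic (hP.map φ)
  obtain ⟨D, hD, h⟩ := exists_bound_divByMonic_prod_X_sub_C (K := K) (P.map φ).roots
    fun a ha => hroots a (by simpa [φ, eval_map_algebraMap] using isRoot_of_mem_roots ha)
  refine ⟨D, hD, fun p M hM hp => ?_⟩
  have hpφ := h (p.map φ) M hM (by simpa [φ, eval_map_algebraMap] using hp)
  rw [← hsplit, ← map_divByMonic φ hP, ← map_modByMonic φ hP] at hpφ
  simpa [φ, eval_map_algebraMap] using hpφ

end PolynomialDivision

section FunctionalCalculus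

variable {𝔸 : Type*} [NormedRing 𝔸] [NormedAlgebra ℝ 𝔸]

theorem aeval_modByMonic_eq_sum {P : ℝ[X]} (hP : P.Monic) (p : ℝ[X]) (b : 𝔸) :
    aeval b (p %ₘ P) = ∑ k : Fin P.natDegree, (p %ₘ P).coeff k • b ^ (k : ℕ) := by
  conv_lhs => rw [← sum_modByMonic_coeff hP degree_le_natDegree]
  simp [aeval_monomial, Algebra.smul_def]

theorem norm_aeval_modByMonic_le {P : ℝ[X]} (hP : P.Monic) (p : ℝ[X]) (b : 𝔸) {c : ℝ}
    (hc : ∀ k, ‖(p %ₘ P).coeff k‖ ≤ c) :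
    ‖aeval b (p %ₘ P)‖ ≤ c * ∑ k : Fin P.natDegree, ‖b ^ (k : ℕ)‖ := by
  rw [aeval_modByMonic_eq_sum hP, Finset.mul_sum]
  refine norm_sum_le_of_le _ fun k _ => ?_
  rw [norm_smul]
  gcongr
  exact hc k

theorem differentiable_aeval {𝕜 𝔸 : Type*} [NontriviallyNormedField 𝕜] [NormedRing 𝔸]
    [NormedAlgebra 𝕜 𝔸] (p : 𝕜[X]) : Differentiable 𝕜 (fun b : 𝔸 => aeval b p) := by
  simp only [aeval_eq_sum_range]
  fun_prop

theorem aeval_eq_aeval_modByMonic_add (P p : ℝ[X]) (b : 𝔸) :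
    aeval b p = aeval b (p %ₘ P) + aeval b P * aeval b (p /ₘ P) := by
  rw [← map_mul, ← map_add, modByMonic_add_div]

theorem divByMonic_induction {R : Type*} [CommRing R] {P : R[X]} (hP : P.Monic) (hP1 : P ≠ 1)
    {motive : R[X] → Prop} (zero : motive 0) (div : ∀ p, motive (p /ₘ P) → motive p) (p : R[X]) :
    motive p := by
  induction p using degree_lt_wf.induction with
  | _ p ih =>
    rcases eq_or_ne p 0 with rfl | hp
    · exact zero
    · refine div p (ih _ (degree_divByMonic_lt p P hp ?_))
      exact natDegree_pos_iff_degree_pos.mp (hP.natDegree_pos.mpr hP1)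

theorem exists_eventually_norm_aeval_le {K : Set ℂ} {P : ℝ[X]} (hP : P.Monic)
    (hroots : ∀ z : ℂ, aeval z P = 0 → z ∈ interior K) {a : 𝔸} (ha : aeval a P = 0) :
    ∃ B : ℝ, 0 ≤ B ∧ ∀ᶠ b in nhds a, ∀ (p : ℝ[X]) (M : ℝ), 0 ≤ M →
      (∀ z ∈ K, ‖aeval z p‖ ≤ M) → ‖aeval b p‖ ≤ B * M := by
  rcases subsingleton_or_nontrivial 𝔸 with h𝔸 | h𝔸
  · exact ⟨0, le_rfl, .of_forall fun b p M _ _ => by simp [Subsingleton.elim (aeval b p) 0]⟩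
  have hP1 : P ≠ 1 := by
    rintro rfl
    simp at ha
  obtain ⟨D, hD, hdiv⟩ := exists_bound_divByMonic hP hroots
  set S : 𝔸 → ℝ := fun b => ∑ k : Fin P.natDegree, ‖b ^ (k : ℕ)‖
  have hSa : ∀ᶠ b in nhds a, S b < S a + 1 :=
    (by fun_prop : Continuous S).continuousAt.eventually_lt_const (lt_add_one _)
  have hPa : ∀ᶠ b in nhds a, ‖aeval b P‖ * D < 1 / 2 :=
    ((P.continuous_aeval.norm.mul_const D).continuousAt).eventually_lt_const (by simp [ha])
  have : 0 ≤ S a := Finset.sum_nonneg fun k _ => norm_nonneg _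
  set B : ℝ := 2 * (D * (S a + 1)) with hB
  refine ⟨B, by positivity, ?_⟩
  filter_upwards [hSa, hPa] with b hSb hPb p
  -- Writing `p = r + P * q`, the small factor `P(b)` absorbs the growth of the quotient `q`.
  induction p using divByMonic_induction hP hP1 with
  | zero => exact fun M hM _ => by simpa using by positivity
  | div p ih =>
    intro M hM hp
    obtain ⟨hquot, hrem⟩ := hdiv p M hM hp
    calc ‖aeval b p‖ ≤ ‖aeval b (p %ₘ P)‖ + ‖aeval b P‖ * ‖aeval b (p /ₘ P)‖ := by
          rw [aeval_eq_aeval_modByMonic_add P p]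
          exact norm_add_le_of_le le_rfl (norm_mul_le _ _)
      _ ≤ D * M * (S a + 1) + ‖aeval b P‖ * (B * (D * M)) := by
          gcongr
          · exact (norm_aeval_modByMonic_le hP p b hrem).trans (by gcongr)
          · exact ih _ (by positivity) hquot
      _ = B * M / 2 + ‖aeval b P‖ * D * (B * M) := by rw [hB]; ring
      _ ≤ B * M / 2 + 1 / 2 * (B * M) := by gcongr
      _ = B * M := by ring

section Limits

variable {K : Set ℂ} {p : ℕ → ℝ[X]}

theorem exists_norm_aeval_sub_le
    (hp : UniformCauchySeqOn (fun m z => aeval z (p m)) atTop K) {ε : ℝ} (hε : 0 < ε) :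
    ∃ N, ∀ m ≥ N, ∀ k ≥ N, ∀ z ∈ K, ‖aeval z (p m - p k)‖ ≤ ε := by
  obtain ⟨N, hN⟩ := Metric.uniformCauchySeqOn_iff.mp hp ε hε
  refine ⟨N, fun m hm k hk z hz => ?_⟩
  simpa [dist_eq_norm] using (hN m hm k hk z hz).le

theorem exists_tendsto_aeval_modByMonic
    (hp : UniformCauchySeqOn (fun m z => aeval z (p m)) atTop K) {Q : ℝ[X]} (hQ : Q.Monic)
    (hroots : ∀ z : ℂ, aeval z Q = 0 → z ∈ interior K) :
    ∃ q : ℝ[X], ∀ b : 𝔸, Tendsto (fun m => aeval b (p m %ₘ Q)) atTop (nhds (aeval b q)) := by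
  obtain ⟨D, hD, hdiv⟩ := exists_bound_divByMonic hQ hroots
  have hcauchy : ∀ k, CauchySeq fun m => (p m %ₘ Q).coeff k := by
    refine fun k => Metric.cauchySeq_iff.mpr fun ε hε => ?_
    obtain ⟨N, hN⟩ := exists_norm_aeval_sub_le hp (ε := ε / (D + 1)) (by positivity)
    refine ⟨N, fun m hm l hl => ?_⟩
    rw [dist_eq_norm, ← coeff_sub, ← sub_modByMonic]
    calc _ ≤ D * (ε / (D + 1)) := (hdiv _ _ (by positivity) (hN m hm l hl)).2 k
      _ < ε := by
        rw [← mul_div_assoc, div_lt_iff₀ (by positivity)]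
        linarith
  choose c hc using fun k => cauchySeq_tendsto_of_complete (hcauchy k)
  refine ⟨∑ k : Fin Q.natDegree, monomial k (c k), fun b => ?_⟩
  simp only [aeval_modByMonic_eq_sum hQ, map_sum, aeval_monomial, ← Algebra.smul_def]
  exact tendsto_finsetSum _ fun k _ => (hc k).smul_const _

theorem exists_eventually_norm_aeval_divByMonic_le
    (hp : UniformCauchySeqOn (fun m z => aeval z (p m)) atTop K) {P Q : ℝ[X]} (hP : P.Monic)
    (hQ : Q.Monic) (hProots : ∀ z : ℂ, aeval z P = 0 → z ∈ interior K)
    (hQroots : ∀ z : ℂ, aeval z Q = 0 → z ∈ interior K) {a : 𝔸} (ha : aeval a P = 0) :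
    ∃ C : ℝ, ∀ᶠ b in nhds a, ∀ᶠ m in atTop, ‖aeval b (p m /ₘ Q)‖ ≤ C := by
  obtain ⟨D, hD, hdiv⟩ := exists_bound_divByMonic hQ hQroots
  obtain ⟨B, -, hbound⟩ := exists_eventually_norm_aeval_le hP hProots ha
  obtain ⟨N, hN⟩ := exists_norm_aeval_sub_le hp one_pos
  have hcont : ∀ᶠ b in nhds a, ‖aeval b (p N /ₘ Q)‖ < ‖aeval a (p N /ₘ Q)‖ + 1 :=
    (p N /ₘ Q).continuous_aeval.norm.continuousAt.eventually_lt_const (lt_add_one _)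
  refine ⟨B * (D * 1) + (‖aeval a (p N /ₘ Q)‖ + 1), ?_⟩
  filter_upwards [hbound, hcont] with b hb hbN
  filter_upwards [eventually_ge_atTop N] with m hm
  have hquot := hb _ (D * 1) (by positivity) (hdiv _ 1 zero_le_one (hN m hm N le_rfl)).1
  rw [sub_divByMonic hQ, map_sub] at hquot
  linarith [norm_le_norm_sub_add (aeval b (p m /ₘ Q)) (aeval b (p N /ₘ Q))]

-- `q` is the limit of the remainders of `p m` modulo `P ^ 2`, that is, the Hermite interpolation
-- polynomial of the limit function at the roots of `P`, each with twice its multiplicity.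
theorem exists_sub_aeval_isBigO
    (hp : UniformCauchySeqOn (fun m z => aeval z (p m)) atTop K) {P : ℝ[X]} (hP : P.Monic)
    (hroots : ∀ z : ℂ, aeval z P = 0 → z ∈ interior K) {a : 𝔸} (ha : aeval a P = 0)
    {α : Type*} {l : Filter α} {A F : α → 𝔸} (hA : Tendsto A l (nhds a))
    (hF : ∀ᶠ y in l, Tendsto (fun m => aeval (A y) (p m)) atTop (nhds (F y))) :
    ∃ q : ℝ[X], (fun y => F y - aeval (A y) q) =O[l] fun y => ‖A y - a‖ ^ 2 := by
  have hroots2 : ∀ z : ℂ, aeval z (P ^ 2) = 0 → z ∈ interior K := fun z hz =>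
    hroots z (eq_zero_of_pow_eq_zero (by rwa [map_pow] at hz))
  obtain ⟨q, hq⟩ := exists_tendsto_aeval_modByMonic (𝔸 := 𝔸) hp (hP.pow 2) hroots2
  obtain ⟨C, hC⟩ := exists_eventually_norm_aeval_divByMonic_le hp hP (hP.pow 2) hroots hroots2 ha
  have hPO : (fun y => aeval (A y) P) =O[l] fun y => A y - a := by
    have h := ((differentiable_aeval P a).isBigO_sub).comp_tendsto hA
    simpa only [Function.comp_def, ha, sub_zero] using h
  refine ⟨q, .trans (.of_bound C ?_) (hPO.norm_norm.pow 2)⟩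
  filter_upwards [hF, hA.eventually hC] with y hFy hCy
  have hlim := (hFy.sub (hq (A y))).norm
  refine le_of_tendsto hlim (hCy.mono fun m hm => ?_)
  rw [aeval_eq_aeval_modByMonic_add (P ^ 2) (p m), add_sub_cancel_left, mul_comm C, norm_pow,
    norm_norm, map_pow]
  refine (norm_mul_le _ _).trans ?_
  gcongr
  exact norm_pow_le' _ two_pos

theorem exists_hasFDerivAt_aeval_of_tendsto {E : Type*} [NormedAddCommGroup E] [NormedSpace ℝ E]
    (hp : UniformCauchySeqOn (fun m z => aeval z (p m)) atTop K) {A F : E → 𝔸} {x : E}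
    (hA : DifferentiableAt ℝ A x) {P : ℝ[X]} (hP : P.Monic) (hPA : aeval (A x) P = 0)
    (hroots : ∀ z : ℂ, aeval z P = 0 → z ∈ interior K)
    (hF : ∀ᶠ y in nhds x, Tendsto (fun m => aeval (A y) (p m)) atTop (nhds (F y))) :
    ∃ q : ℝ[X], F x = aeval (A x) q ∧
      HasFDerivAt F (fderiv ℝ (fun y => aeval (A y) q) x) x := by
  obtain ⟨q, hq⟩ := exists_sub_aeval_isBigO hp hP hroots hPA hA.continuousAt hF
  refine ⟨q, ?_, ?_⟩
  · obtain ⟨c, hc⟩ := hq.bound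
    simpa [sub_eq_zero] using hc.self_of_nhds
  · have hdiff : HasFDerivAt (fun y => F y - aeval (A y) q) (0 : E →L[ℝ] 𝔸) x :=
      (hq.trans (hA.isBigO_sub.norm_norm.pow 2)).hasFDerivAt one_lt_two
    have hqA : DifferentiableAt ℝ (fun y => aeval (A y) q) x :=
      (differentiable_aeval q (A x)).comp x hA
    simpa using hdiff.fun_add hqA.hasFDerivAt

end Limits

end FunctionalCalculus

section MatrixFunctions

open scoped Matrix.Norms.Operator

variable {n : Type*} [Fintype n] [DecidableEq n]

theorem norm_map_ofReal (A : Matrix n n ℝ) : ‖A.map (algebraMap ℝ ℂ)‖ = ‖A‖ := by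
  simp [Matrix.linfty_opNorm_def]

theorem aeval_map_ofReal (A : Matrix n n ℝ) (p : ℝ[X]) :
    aeval (A.map (algebraMap ℝ ℂ)) (p.map (algebraMap ℝ ℂ)) =
      (aeval A p).map (algebraMap ℝ ℂ) := by
  rw [aeval_map_algebraMap]
  exact aeval_algHom_apply (Algebra.ofId ℝ ℂ).mapMatrix A p

theorem mem_spectrum_map_ofReal_iff {A : Matrix n n ℝ} {z : ℂ} :
    z ∈ spectrum ℂ (A.map (algebraMap ℝ ℂ)) ↔ aeval z A.charpoly = 0 := by
  rw [Matrix.mem_spectrum_iff_isRoot_charpoly, Matrix.charpoly_map, IsRoot.def,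
    eval_map_algebraMap]

theorem aeval_mem_spectrum_map_ofReal {A : Matrix n n ℝ} {z : ℂ}
    (hz : z ∈ spectrum ℂ (A.map (algebraMap ℝ ℂ))) (p : ℝ[X]) :
    aeval z p ∈ spectrum ℂ ((aeval A p).map (algebraMap ℝ ℂ)) := by
  have h := spectrum.subset_polynomial_aeval _ (p.map (algebraMap ℝ ℂ))
    (Set.mem_image_of_mem _ hz)
  rwa [aeval_map_ofReal, eval_map_algebraMap] at h

theorem aeval_eq_of_tendsto_aeval {p : ℕ → ℝ[X]} {q : ℝ[X]} {A : Matrix n n ℝ} {z w : ℂ}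
    (hz : z ∈ spectrum ℂ (A.map (algebraMap ℝ ℂ)))
    (hA : Tendsto (fun m => aeval A (p m)) atTop (nhds (aeval A q)))
    (hw : Tendsto (fun m => aeval z (p m)) atTop (nhds w)) : aeval z q = w := by
  refine tendsto_nhds_unique (tendsto_iff_norm_sub_tendsto_zero.mpr ?_) hw
  have hlim := (tendsto_iff_norm_sub_tendsto_zero.mp hA).mul_const ‖(1 : Matrix n n ℂ)‖
  rw [zero_mul] at hlim
  refine squeeze_zero (fun _ => norm_nonneg _) (fun m => ?_) hlim
  have h := spectrum.norm_le_norm_mul_of_mem (aeval_mem_spectrum_map_ofReal hz (p m - q))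
  rwa [norm_map_ofReal, map_sub, map_sub] at h

theorem isUnit_det_aeval {A : Matrix n n ℝ} {q : ℝ[X]}
    (hq : ∀ z ∈ spectrum ℂ (A.map (algebraMap ℝ ℂ)), aeval z q ≠ 0) :
    IsUnit (aeval A q).det := by
  cases isEmpty_or_nonempty n
  · simp
  have h0 : (0 : ℂ) ∉ spectrum ℂ ((aeval A q).map (algebraMap ℝ ℂ)) := by
    rw [← aeval_map_ofReal, spectrum.map_polynomial_aeval]
    rintro ⟨z, hz, hz0⟩
    exact hq z hz (by simpa [eval_map_algebraMap] using hz0)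
  rw [spectrum.zero_notMem_iff, Matrix.isUnit_iff_isUnit_det] at h0
  rw [isUnit_iff_ne_zero] at h0 ⊢
  exact fun h => h0 (by
    rw [← RingHom.mapMatrix_apply, ← RingHom.map_det, h, map_zero])

theorem exists_hasFDerivAt_matrix_aeval_of_tendsto {E : Type*} [NormedAddCommGroup E]
    [NormedSpace ℝ E] {K : Set ℂ} {f : ℂ → ℂ} {p : ℕ → ℝ[X]}
    (hp : TendstoUniformlyOn (fun m z => aeval z (p m)) f atTop K)
    {A F : E → Matrix n n ℝ} {x : E} (hA : DifferentiableAt ℝ A x)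
    (hspec : spectrum ℂ ((A x).map (algebraMap ℝ ℂ)) ⊆ interior K)
    (hF : ∀ᶠ y in nhds x, Tendsto (fun m => aeval (A y) (p m)) atTop (nhds (F y))) :
    ∃ q : ℝ[X], F x = aeval (A x) q ∧
      HasFDerivAt F (fderiv ℝ (fun y => aeval (A y) q) x) x ∧
      ∀ z ∈ spectrum ℂ ((A x).map (algebraMap ℝ ℂ)), aeval z q = f z := by
  obtain ⟨q, hFx, hFq⟩ := exists_hasFDerivAt_aeval_of_tendsto hp.uniformCauchySeqOn hA
    (A x).charpoly_monic (Matrix.aeval_self_charpoly (A x))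
    (fun z hz => hspec (mem_spectrum_map_ofReal_iff.mpr hz)) hF
  refine ⟨q, hFx, hFq, fun z hz => aeval_eq_of_tendsto_aeval hz ?_
    (hp.tendsto_at (interior_subset (hspec hz)))⟩
  rw [← hFx]
  exact hF.self_of_nhds

end MatrixFunctions

section PolynomialDerivative

variable {S R : Type*} [CommRing S] [Ring R] [Algebra S R]

/-- The derivative of `q` at `A` in the direction `Y` for noncommuting `A` and `Y`: the coefficient
of `ε` in `q(A + εY)`, computed in the dual numbers over `R`. -/
def polyDeriv (A : R) (q : S[X]) (Y : R) : R :=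
  (aeval (TrivSqZeroExt.inl A + TrivSqZeroExt.inr Y : TrivSqZeroExt R R) q).snd

theorem fst_aeval_inl_add_inr (A Y : R) (q : S[X]) :
    (aeval (TrivSqZeroExt.inl A + TrivSqZeroExt.inr Y : TrivSqZeroExt R R) q).fst = aeval A q := by
  have h := aeval_algHom_apply (TrivSqZeroExt.fstHom S R R)
    (TrivSqZeroExt.inl A + TrivSqZeroExt.inr Y) q
  simpa using h.symm

theorem polyDeriv_mul (A : R) (p q : S[X]) (Y : R) :
    polyDeriv A (p * q) Y = aeval A p * polyDeriv A q Y + polyDeriv A p Y * aeval A q := by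
  simp only [polyDeriv, map_mul, TrivSqZeroExt.snd_mul, fst_aeval_inl_add_inr, smul_eq_mul,
    op_smul_eq_mul]

theorem polyDeriv_add (A : R) (p q : S[X]) (Y : R) :
    polyDeriv A (p + q) Y = polyDeriv A p Y + polyDeriv A q Y := by
  simp only [polyDeriv, map_add, TrivSqZeroExt.snd_add]

theorem polyDeriv_C (A : R) (a : S) (Y : R) : polyDeriv A (C a) Y = 0 := by
  simp [polyDeriv, TrivSqZeroExt.algebraMap_eq_inl']

theorem polyDeriv_X (A Y : R) : polyDeriv A (X : S[X]) Y = Y := by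
  simp [polyDeriv]

theorem polyDeriv_mul_X (A : R) (q : S[X]) (Y : R) :
    polyDeriv A (q * X) Y = aeval A q * Y + polyDeriv A q Y * A := by
  rw [polyDeriv_mul, polyDeriv_X, aeval_X]

theorem polyDeriv_X_mul (A : R) (q : S[X]) (Y : R) :
    polyDeriv A (X * q) Y = A * polyDeriv A q Y + Y * aeval A q := by
  rw [polyDeriv_mul, polyDeriv_X, aeval_X]

theorem polynomial_induction_mul_X {motive : S[X] → Prop} (C : ∀ a, motive (C a))
    (add : ∀ p q, motive p → motive q → motive (p + q))
    (mul_X : ∀ q, motive q → motive (q * X)) (q : S[X]) : motive q :=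
  q.induction_on C add fun n a h => by
    rw [pow_succ, ← mul_assoc]
    exact mul_X _ h

theorem polyDeriv_add_right (A : R) (q : S[X]) (Y Z : R) :
    polyDeriv A q (Y + Z) = polyDeriv A q Y + polyDeriv A q Z := by
  induction q using polynomial_induction_mul_X with
  | C a => simp only [polyDeriv_C, add_zero]
  | add p q hp hq =>
    simp only [polyDeriv_add, hp, hq]
    abel
  | mul_X q hq =>
    simp only [polyDeriv_mul_X, hq]
    noncomm_ring

variable {n : Type*} [Fintype n] [DecidableEq n] {g A : Matrix n n S}

theorem mul_aeval_eq_transpose_mul (hA : g * A = Aᵀ * g) (q : S[X]) :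
    g * aeval A q = (aeval A q)ᵀ * g := by
  induction q using polynomial_induction_mul_X with
  | C a => simp [Algebra.algebraMap_eq_smul_one]
  | add p q hp hq => rw [map_add, mul_add, hp, hq, transpose_add, add_mul]
  | mul_X q hq =>
    have hcomm : A * aeval A q = aeval A q * A := by
      simpa only [map_mul, aeval_X] using congrArg (aeval A) (X_mul (p := q))
    calc g * aeval A (q * X) = g * (A * aeval A q) := by rw [map_mul, aeval_X, hcomm]
      _ = (aeval A q * A)ᵀ * g := by
        rw [← mul_assoc, hA, mul_assoc, hq, ← mul_assoc, ← transpose_mul]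
      _ = (aeval A (q * X))ᵀ * g := by rw [map_mul, aeval_X]

theorem transpose_polyDeriv_mul (hA : g * A = Aᵀ * g) {P N : Matrix n n S} (hPN : Pᵀ * g = g * N)
    (q : S[X]) : (polyDeriv A q P)ᵀ * g = g * polyDeriv A q N := by
  induction q using polynomial_induction_mul_X with
  | C a => simp only [polyDeriv_C, transpose_zero, zero_mul, mul_zero]
  | add p q hp hq => simp only [polyDeriv_add, transpose_add, add_mul, mul_add, hp, hq]
  | mul_X q hq =>
    calc (polyDeriv A (q * X) P)ᵀ * g = (A * polyDeriv A q P + P * aeval A q)ᵀ * g := by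
          rw [← X_mul, polyDeriv_X_mul]
      _ = (polyDeriv A q P)ᵀ * (Aᵀ * g) + (aeval A q)ᵀ * (Pᵀ * g) := by
          simp only [transpose_add, transpose_mul, add_mul, mul_assoc]
      _ = (polyDeriv A q P)ᵀ * g * A + (aeval A q)ᵀ * g * N := by
          rw [← hA, hPN]
          simp only [mul_assoc]
      _ = g * (aeval A q * N + polyDeriv A q N * A) := by
          rw [hq, ← mul_aeval_eq_transpose_mul hA]
          noncomm_ring
      _ = g * polyDeriv A (q * X) N := by rw [polyDeriv_mul_X]

theorem polyDeriv_vecMulVec_swap (hg : gᵀ = g) (hA : g * A = Aᵀ * g) (u : n → S) (q : S[X])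
    (i j k : n) :
    polyDeriv A q (vecMulVec u (g k)) i j = polyDeriv A q (vecMulVec u (g j)) i k := by
  induction q using polynomial_induction_mul_X generalizing i with
  | C a => simp only [polyDeriv_C, Matrix.zero_apply]
  | add p q hp hq => simp only [polyDeriv_add, Matrix.add_apply, hp, hq]
  | mul_X q hq =>
    have hsymm : (g * aeval A q) k j = (g * aeval A q) j k := by
      rw [← transpose_apply (g * aeval A q), transpose_mul, hg, mul_aeval_eq_transpose_mul hA]
    have hrow : ∀ k j, (vecMulVec u (g k) * aeval A q) i j = u i * (g * aeval A q) k j :=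
      fun k j => by rw [vecMulVec_mul, vecMulVec_apply]; rfl
    have hcol : (A * polyDeriv A q (vecMulVec u (g k))) i j =
        (A * polyDeriv A q (vecMulVec u (g j))) i k := by
      simp only [Matrix.mul_apply, hq]
    rw [← X_mul, polyDeriv_X_mul, polyDeriv_X_mul, Matrix.add_apply, Matrix.add_apply, hrow, hrow,
      hsymm, hcol]

end PolynomialDerivative

section MatrixCalculus

section Entries

variable {𝕜 E m n : Type*} [NontriviallyNormedField 𝕜] [NormedAddCommGroup E] [NormedSpace 𝕜 E]
  {x : E}

theorem differentiableAt_matrix_iff [Finite n] {A : E → Matrix m n 𝕜} :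
    DifferentiableAt 𝕜 A x ↔ ∀ i j, DifferentiableAt 𝕜 (fun y => A y i j) x := by
  cases nonempty_fintype n
  exact (differentiableAt_pi (𝕜 := 𝕜) (F' := fun _ => n → 𝕜) (Φ := A)).trans
    (forall_congr' fun _ => differentiableAt_pi)

theorem fderiv_matrix_apply [Finite n] {A : E → Matrix m n 𝕜} (hA : DifferentiableAt 𝕜 A x)
    (v : E) (i : m) (j : n) : fderiv 𝕜 A x v i j = fderiv 𝕜 (fun y => A y i j) x v := by
  cases nonempty_fintype n
  have h := hasFDerivAt_pi'.mp (hasFDerivAt_pi'.mp hA.hasFDerivAt i) j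
  rw [h.fderiv]
  rfl

theorem differentiableAt_matrix_smul [Finite n] {c : E → 𝕜} {A : E → Matrix m n 𝕜}
    (hc : DifferentiableAt 𝕜 c x) (hA : DifferentiableAt 𝕜 A x) :
    DifferentiableAt 𝕜 (fun y => c y • A y) x :=
  differentiableAt_matrix_iff.mpr fun i j => hc.mul (differentiableAt_matrix_iff.mp hA i j)

variable [Fintype n]

theorem differentiableAt_matrix_mul {A B : E → Matrix n n 𝕜} (hA : DifferentiableAt 𝕜 A x)
    (hB : DifferentiableAt 𝕜 B x) : DifferentiableAt 𝕜 (fun y => A y * B y) x :=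
  differentiableAt_matrix_iff.mpr fun i j => by
    simp only [Matrix.mul_apply]
    exact DifferentiableAt.fun_sum fun l _ =>
      (differentiableAt_matrix_iff.mp hA i l).mul (differentiableAt_matrix_iff.mp hB l j)

variable [DecidableEq n] {A : E → Matrix n n 𝕜}

theorem differentiableAt_det (hA : DifferentiableAt 𝕜 A x) :
    DifferentiableAt 𝕜 (fun y => (A y).det) x := by
  simp only [det_apply']
  refine DifferentiableAt.fun_sum fun σ _ => DifferentiableAt.const_mul ?_ _
  exact (HasFDerivAt.finsetProd fun i _ =>
    (differentiableAt_matrix_iff.mp hA (σ i) i).hasFDerivAt).differentiableAt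

theorem fderiv_det_apply (hA : DifferentiableAt 𝕜 A x) (v : E) :
    fderiv 𝕜 (fun y => (A y).det) x v = ((A x).adjugate * fderiv 𝕜 A x v).trace := by
  have h : HasFDerivAt (fun y => (A y).det) (∑ σ : Equiv.Perm n, (Equiv.Perm.sign σ : 𝕜) •
      ∑ i, (∏ j ∈ Finset.univ.erase i, A x (σ j) j) • fderiv 𝕜 (fun y => A y (σ i) i) x) x := by
    simp only [det_apply']
    exact HasFDerivAt.fun_sum fun σ _ => HasFDerivAt.const_mul (HasFDerivAt.finsetProd fun i _ =>
      (differentiableAt_matrix_iff.mp hA (σ i) i).hasFDerivAt) _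
  have hcol : ∀ i, ((A x).adjugate * fderiv 𝕜 A x v) i i =
      ((A x).updateCol i fun l => fderiv 𝕜 A x v l i).det := fun i => by
    rw [← cramer_apply, cramer_eq_adjugate_mulVec]
    rfl
  rw [h.fderiv, Matrix.trace]
  simp only [diag_apply, hcol, det_apply', _root_.sum_apply, _root_.smul_apply, smul_eq_mul,
    Finset.mul_sum]
  rw [Finset.sum_comm]
  refine Finset.sum_congr rfl fun i _ => Finset.sum_congr rfl fun σ _ => ?_
  rw [← Finset.prod_erase_mul _ _ (Finset.mem_univ i), updateCol_self, fderiv_matrix_apply hA]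
  congr 2
  refine Finset.prod_congr rfl fun j hj => ?_
  rw [updateCol_ne (Finset.ne_of_mem_erase hj)]

end Entries

section Smoothness

variable {E n : Type*} [NormedAddCommGroup E] [NormedSpace ℝ E]
  {N : WithTop ℕ∞} {U : Set E} {A : E → Matrix n n ℝ}

theorem differentiableAt_of_contDiffOn_entries [Finite n] (hN : N ≠ 0) (hU : IsOpen U)
    (hA : ∀ i j, ContDiffOn ℝ N (fun x => A x i j) U) {x : E} (hx : x ∈ U) :
    DifferentiableAt ℝ A x :=
  differentiableAt_matrix_iff.mpr fun i j =>
    ((hA i j).contDiffAt (hU.mem_nhds hx)).differentiableAt hN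

variable [Fintype n] [DecidableEq n]

theorem contDiffOn_det (hA : ∀ i j, ContDiffOn ℝ N (fun x => A x i j) U) :
    ContDiffOn ℝ N (fun x => (A x).det) U := by
  simp only [det_apply']
  exact ContDiffOn.sum fun σ _ => contDiffOn_const.mul (contDiffOn_prod fun i _ => hA (σ i) i)

theorem contDiffOn_nonsing_inv (hA : ∀ i j, ContDiffOn ℝ N (fun x => A x i j) U)
    (hdet : ∀ x ∈ U, IsUnit (A x).det) (i j : n) :
    ContDiffOn ℝ N (fun x => (A x)⁻¹ i j) U := by
  have hadj : ContDiffOn ℝ N (fun x => (A x).adjugate i j) U := by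
    simp only [adjugate_apply]
    refine contDiffOn_det fun a b => ?_
    rcases eq_or_ne a j with rfl | h
    · simpa only [updateRow_self] using contDiffOn_const
    · simpa only [updateRow_ne h] using hA a b
  simp only [Matrix.inv_def, Matrix.smul_apply, smul_eq_mul, Ring.inverse_eq_inv']
  exact ((contDiffOn_det hA).inv fun x hx => (hdet x hx).ne_zero).mul hadj

end Smoothness

theorem fderiv_div_rpow_apply {E : Type*} [NormedAddCommGroup E] [NormedSpace ℝ E] {a b : E → ℝ}
    {x v : E} (ha : DifferentiableAt ℝ a x) (hb : DifferentiableAt ℝ b x) (ha0 : a x ≠ 0)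
    (hb0 : b x ≠ 0) {α β : ℝ} (hα : fderiv ℝ a x v = a x * α) (hβ : fderiv ℝ b x v = b x * β)
    (s : ℝ) : fderiv ℝ (fun y => (b y / a y) ^ s) x v = s * (β - α) * (b x / a x) ^ s := by
  have hne : b x * (a x)⁻¹ ≠ 0 := mul_ne_zero hb0 (inv_ne_zero ha0)
  have hinv : HasFDerivAt (fun y => (a y)⁻¹) _ x :=
    (hasDerivAt_inv ha0).comp_hasFDerivAt x ha.hasFDerivAt
  have hquot := (hb.hasFDerivAt.fun_mul hinv).rpow_const (p := s) (Or.inl hne)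
  simp only [div_eq_mul_inv, hquot.fderiv, _root_.smul_apply, _root_.add_apply, smul_eq_mul, hα, hβ]
  rw [Real.rpow_sub_one hne]
  field_simp
  ring

section PartialDerivatives

variable {n : Type} [DecidableEq n] {k : n} {A B : (n → ℝ) → Matrix n n ℝ} {x : n → ℝ}

/-- The partial derivative `∂A/∂xᵏ` of a matrix-valued function. -/
def pdMatrix (k : n) (A : (n → ℝ) → Matrix n n ℝ) (x : n → ℝ) : Matrix n n ℝ :=
  fderiv ℝ A x (Pi.single k 1)

theorem pdMatrix_apply [Finite n] (hA : DifferentiableAt ℝ A x) (i j : n) :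
    pdMatrix k A x i j = pd k (fun y => A y i j) x := by
  cases nonempty_fintype n
  exact fderiv_matrix_apply hA _ i j

theorem pdMatrix_transpose [Finite n] (hA : DifferentiableAt ℝ A x) :
    pdMatrix k (fun y => (A y)ᵀ) x = (pdMatrix k A x)ᵀ := by
  cases nonempty_fintype n
  ext i j
  have hAT : DifferentiableAt ℝ (fun y => (A y)ᵀ) x :=
    differentiableAt_matrix_iff.mpr fun i j => differentiableAt_matrix_iff.mp hA j i
  rw [pdMatrix_apply hAT, transpose_apply, pdMatrix_apply hA]
  rfl

section Algebra

open scoped Matrix.Norms.Operator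

theorem pdMatrix_add [Finite n] (hA : DifferentiableAt ℝ A x) (hB : DifferentiableAt ℝ B x) :
    pdMatrix k (fun y => A y + B y) x = pdMatrix k A x + pdMatrix k B x := by
  cases nonempty_fintype n
  exact congrArg (· (Pi.single k 1)) (fderiv_fun_add hA hB)

theorem pdMatrix_smul [Finite n] {c : (n → ℝ) → ℝ} (hc : DifferentiableAt ℝ c x)
    (hA : DifferentiableAt ℝ A x) :
    pdMatrix k (fun y => c y • A y) x = pd k c x • A x + c x • pdMatrix k A x := by
  cases nonempty_fintype n
  rw [add_comm]
  exact congrArg (· (Pi.single k 1)) (fderiv_fun_smul hc hA)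

variable [Fintype n]

theorem pdMatrix_mul (hA : DifferentiableAt ℝ A x) (hB : DifferentiableAt ℝ B x) :
    pdMatrix k (fun y => A y * B y) x = pdMatrix k A x * B x + A x * pdMatrix k B x := by
  rw [add_comm]
  exact congrArg (· (Pi.single k 1)) (fderiv_fun_mul' hA hB)

theorem differentiableAt_matrix_aeval (hA : DifferentiableAt ℝ A x) (q : ℝ[X]) :
    DifferentiableAt ℝ (fun y => aeval (A y) q) x :=
  (differentiable_aeval q (A x)).comp x hA

end Algebra

end PartialDerivatives

end MatrixCalculus

section Connection

variable {n : Type} [Fintype n] [DecidableEq n] {g h : (n → ℝ) → Matrix n n ℝ} {x : n → ℝ}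

/-- The connection matrix `(Γ_k)^i_j = Γ^i_{kj}` of a metric. -/
def christoffelMatrix (g : (n → ℝ) → Matrix n n ℝ) (x : n → ℝ) (k : n) : Matrix n n ℝ :=
  of fun i j => christoffel g x i k j

theorem mul_christoffelMatrix_apply (hd : DifferentiableAt ℝ g x) (hg : IsUnit (g x).det)
    (k m j : n) :
    (g x * christoffelMatrix g x k) m j = (1 / 2) *
      (pdMatrix k g x m j + pdMatrix j g x m k - pdMatrix m g x k j) := by
  let w : n → ℝ := fun m => (1 / 2) *
    (pdMatrix k g x m j + pdMatrix j g x m k - pdMatrix m g x k j)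
  have hcol : (fun i => christoffelMatrix g x k i j) = (g x)⁻¹ *ᵥ w := by
    ext i
    simp only [christoffelMatrix, of_apply, christoffel, mulVec, dotProduct, w, pdMatrix_apply hd,
      Finset.mul_sum]
    exact Finset.sum_congr rfl fun l _ => by ring
  calc (g x * christoffelMatrix g x k) m j = (g x *ᵥ fun i => christoffelMatrix g x k i j) m := rfl
    _ = w m := by rw [hcol, mulVec_mulVec, mul_nonsing_inv _ hg, one_mulVec]

theorem pdMatrix_eq_christoffelMatrix (hd : DifferentiableAt ℝ g x) (hg : IsUnit (g x).det)
    (hs : (g x)ᵀ = g x) (hsym : ∀ k, (pdMatrix k g x)ᵀ = pdMatrix k g x) (k : n) :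
    pdMatrix k g x = g x * christoffelMatrix g x k + (christoffelMatrix g x k)ᵀ * g x := by
  have hT : (christoffelMatrix g x k)ᵀ * g x = (g x * christoffelMatrix g x k)ᵀ := by
    rw [transpose_mul, hs]
  have hsym' : ∀ k i j, pdMatrix k g x i j = pdMatrix k g x j i := fun k i j =>
    congrFun (congrFun (hsym k) j) i
  ext i j
  rw [hT, Matrix.add_apply, transpose_apply, mul_christoffelMatrix_apply hd hg,
    mul_christoffelMatrix_apply hd hg, hsym' i k j, hsym' j k i, hsym' k j i]
  ring

theorem christoffelMatrix_eq_of_compat (hd : DifferentiableAt ℝ h x) (hh : IsUnit (h x).det)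
    (hs : (h x)ᵀ = h x) {T : n → Matrix n n ℝ} (hT : ∀ i j k, T k i j = T j i k)
    (hcompat : ∀ k, pdMatrix k h x = h x * T k + (T k)ᵀ * h x) (k : n) :
    christoffelMatrix h x k = T k := by
  have hswap : ∀ m k j, (h x * T k) m j = (h x * T j) m k := fun m k j => by
    simp only [Matrix.mul_apply, hT _ j k]
  have hpd : ∀ k m j, pdMatrix k h x m j = (h x * T k) m j + (h x * T k) j m := fun k m j => by
    have hTh : (T k)ᵀ * h x = (h x * T k)ᵀ := by rw [transpose_mul, hs]
    rw [hcompat, hTh, Matrix.add_apply, transpose_apply]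
  have hmul : h x * christoffelMatrix h x k = h x * T k := by
    ext m j
    rw [mul_christoffelMatrix_apply hd hh, hpd, hpd, hpd, hswap m j k, hswap k j m, hswap j m k]
    ring
  rw [← nonsing_inv_mul_cancel_left (h x) (christoffelMatrix h x k) hh, hmul,
    nonsing_inv_mul_cancel_left (h x) (T k) hh]

section Metric

variable {U : Set (n → ℝ)}

theorem IsMetricOn.differentiableAt (hg : IsMetricOn g U) (hU : IsOpen U) (hx : x ∈ U) :
    DifferentiableAt ℝ g x :=
  differentiableAt_of_contDiffOn_entries (by simp) hU hg.smooth hx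

theorem IsMetricOn.differentiableAt_inv (hg : IsMetricOn g U) (hU : IsOpen U) (hx : x ∈ U) :
    DifferentiableAt ℝ (fun y => (g y)⁻¹) x :=
  differentiableAt_of_contDiffOn_entries (by simp) hU
    (contDiffOn_nonsing_inv hg.smooth hg.nondeg) hx

theorem IsMetricOn.transpose_pdMatrix (hg : IsMetricOn g U) (hU : IsOpen U) (hx : x ∈ U) (k : n) :
    (pdMatrix k g x)ᵀ = pdMatrix k g x := by
  have heq : (fun y => (g y)ᵀ) =ᶠ[nhds x] g := eventually_of_mem (hU.mem_nhds hx) hg.symm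
  rw [← pdMatrix_transpose (hg.differentiableAt hU hx), pdMatrix, heq.fderiv_eq, pdMatrix]

theorem IsMetricOn.pdMatrix_eq (hg : IsMetricOn g U) (hU : IsOpen U) (hx : x ∈ U) (k : n) :
    pdMatrix k g x = g x * christoffelMatrix g x k + (christoffelMatrix g x k)ᵀ * g x :=
  pdMatrix_eq_christoffelMatrix (hg.differentiableAt hU hx) (hg.nondeg x hx) (hg.symm x hx)
    (hg.transpose_pdMatrix hU hx) k

theorem IsMetricOn.christoffel_swap (hg : IsMetricOn g U) (hU : IsOpen U) (hx : x ∈ U)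
    (i j k : n) : christoffel g x i j k = christoffel g x i k j := by
  have hd := hg.differentiableAt hU hx
  have hsymm : ∀ m, pd m (fun y => g y j k) x = pd m (fun y => g y k j) x := fun m => by
    rw [← pdMatrix_apply hd, ← pdMatrix_apply hd, ← transpose_apply (pdMatrix m g x),
      hg.transpose_pdMatrix hU hx]
  simp only [christoffel, hsymm]
  congr 1
  exact Finset.sum_congr rfl fun m _ => by ring

theorem IsMetricOn.pd_det (hg : IsMetricOn g U) (hU : IsOpen U) (hx : x ∈ U) (k : n) :
    pd k (fun y => (g y).det) x = (g x).det * (2 * (christoffelMatrix g x k).trace) := by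
  have hdet := hg.nondeg x hx
  have hadj : (g x).adjugate = (g x).det • (g x)⁻¹ := by
    rw [Matrix.inv_def, smul_smul, Ring.mul_inverse_cancel _ hdet, one_smul]
  rw [pd, fderiv_det_apply (hg.differentiableAt hU hx), ← pdMatrix, hadj, hg.pdMatrix_eq hU hx,
    Matrix.smul_mul, trace_smul, mul_add, trace_add, nonsing_inv_mul_cancel_left _ _ hdet,
    trace_mul_comm _ (_ᵀ * g x), mul_assoc, mul_nonsing_inv _ hdet, mul_one, trace_transpose,
    smul_eq_mul, two_mul]

end Metric

section CovariantDerivative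

/-- The covariant derivative `∇_k A` of a (1,1)-tensor field with respect to the Levi-Civita
connection of `h`. -/
def covDeriv (h A : (n → ℝ) → Matrix n n ℝ) (x : n → ℝ) (k : n) : Matrix n n ℝ :=
  pdMatrix k A x + (christoffelMatrix h x k * A x - A x * christoffelMatrix h x k)

theorem covDeriv_aeval {A : (n → ℝ) → Matrix n n ℝ} (hA : DifferentiableAt ℝ A x) (q : ℝ[X])
    (k : n) : covDeriv h (fun y => aeval (A y) q) x k = polyDeriv (A x) q (covDeriv h A x k) := by
  induction q using polynomial_induction_mul_X with
  | C a =>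
    simp only [covDeriv, aeval_C, pdMatrix, fderiv_fun_const, polyDeriv_C, Pi.zero_apply,
      _root_.zero_apply, Algebra.commutes, sub_self, add_zero]
  | add p q hp hq =>
    rw [polyDeriv_add, ← hp, ← hq]
    simp only [covDeriv, map_add, pdMatrix_add (differentiableAt_matrix_aeval hA p)
      (differentiableAt_matrix_aeval hA q)]
    noncomm_ring
  | mul_X q hq =>
    rw [polyDeriv_mul_X, ← hq]
    simp only [covDeriv, map_mul, aeval_X, pdMatrix_mul (differentiableAt_matrix_aeval hA q) hA]
    noncomm_ring

variable {U : Set (n → ℝ)} {A F : (n → ℝ) → Matrix n n ℝ}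

theorem IsMetricOn.mul_covDeriv (hh : IsMetricOn h U) (hU : IsOpen U) (hx : x ∈ U)
    (hA : DifferentiableAt ℝ A x) (k : n) :
    h x * covDeriv h A x k = pdMatrix k (fun y => h y * A y) x
      - (h x * A x * christoffelMatrix h x k + (christoffelMatrix h x k)ᵀ * (h x * A x)) := by
  rw [pdMatrix_mul (hh.differentiableAt hU hx) hA, hh.pdMatrix_eq hU hx, covDeriv]
  noncomm_ring

theorem IsMetricOn.christoffelMatrix_mul_eq (hh : IsMetricOn h U) (hU : IsOpen U) (hx : x ∈ U)
    (hF : DifferentiableAt ℝ F x) (hFdet : IsUnit (F x).det) (hhF : h x * F x = (F x)ᵀ * h x)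
    {T : n → Matrix n n ℝ} (hT : ∀ i j k, T k i j = T j i k)
    (hcov : ∀ k, h x * covDeriv h F x k = h x * F x * T k + (h x * F x * T k)ᵀ) (k : n) :
    christoffelMatrix (fun y => h y * F y) x k = christoffelMatrix h x k + T k := by
  have hsymm : (h x * F x)ᵀ = h x * F x := by rw [transpose_mul, hh.symm x hx, hhF]
  refine christoffelMatrix_eq_of_compat (T := fun k => christoffelMatrix h x k + T k)
    (differentiableAt_matrix_mul (hh.differentiableAt hU hx) hF)
    (by rw [det_mul]; exact (hh.nondeg x hx).mul hFdet) hsymm (fun i j k => ?_) (fun k => ?_) k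
  · simp only [Matrix.add_apply, christoffelMatrix, of_apply, hT i j k,
      hh.christoffel_swap hU hx i j k]
  · have hpd := hh.mul_covDeriv hU hx hF k
    rw [hcov, transpose_mul (h x * F x), hsymm, eq_sub_iff_add_eq] at hpd
    rw [← hpd, transpose_add]
    noncomm_ring

theorem IsMetricOn.christoffelMatrix_mul_of_jet (hh : IsMetricOn h U) (hU : IsOpen U) (hx : x ∈ U)
    (hA : DifferentiableAt ℝ A x) (hhA : h x * A x = (A x)ᵀ * h x) {q : ℝ[X]}
    (hFx : F x = aeval (A x) q) (hFd : HasFDerivAt F (fderiv ℝ (fun y => aeval (A y) q) x) x)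
    (hFdet : IsUnit (F x).det) {P N : n → Matrix n n ℝ}
    (hcov : ∀ k, covDeriv h A x k = P k + N k) (hPN : ∀ k, (P k)ᵀ * h x = h x * N k)
    (hP : ∀ i j k, polyDeriv (A x) q (P k) i j = polyDeriv (A x) q (P j) i k) (k : n) :
    christoffelMatrix (fun y => h y * F y) x k =
      christoffelMatrix h x k + (F x)⁻¹ * polyDeriv (A x) q (P k) := by
  have hcovF : ∀ k, covDeriv h F x k = polyDeriv (A x) q (P k) + polyDeriv (A x) q (N k) :=
    fun k => by
      rw [← polyDeriv_add_right, ← hcov, ← covDeriv_aeval hA, covDeriv, covDeriv, pdMatrix,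
        hFd.fderiv, hFx, pdMatrix]
  refine hh.christoffelMatrix_mul_eq hU hx hFd.differentiableAt hFdet ?_
    (T := fun k => (F x)⁻¹ * polyDeriv (A x) q (P k)) (fun i j k => ?_) (fun k => ?_) k
  · rw [hFx, mul_aeval_eq_transpose_mul hhA]
  · simp only [Matrix.mul_apply, hP _ j k]
  · rw [mul_assoc, mul_nonsing_inv_cancel_left _ _ hFdet, transpose_mul, hh.symm x hx,
      transpose_polyDeriv_mul hhA (hPN k), hcovF, mul_add]

end CovariantDerivative

end Connection

section ProjectiveChange

variable {n : Type} [Fintype n] [DecidableEq n] {g gb L F : (n → ℝ) → Matrix n n ℝ}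
  {U : Set (n → ℝ)} {x : n → ℝ} {φ : n → ℝ}

/-- The connections of `g` and `gb` at `x` differ by a projective change with covector `φ`:
`Γ̄^i_{kj} = Γ^i_{kj} + φ_k δ^i_j + δ^i_k φ_j`. -/
def IsProjectiveChange (g gb : (n → ℝ) → Matrix n n ℝ) (x φ : n → ℝ) : Prop :=
  ∀ k, christoffelMatrix gb x k =
    christoffelMatrix g x k + φ k • (1 : Matrix n n ℝ) + vecMulVec (Pi.single k 1) φ

/-- The conformal factor `(det ḡ / det g)^{1/(n+1)}` in the definition of `Lten`. -/
def detRatioRoot (g gb : (n → ℝ) → Matrix n n ℝ) (x : n → ℝ) : ℝ :=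
  ((gb x).det / (g x).det) ^ ((1 : ℝ) / (Fintype.card n + 1))

theorem differentiableAt_detRatioRoot (hg : IsMetricOn g U) (hgb : IsMetricOn gb U)
    (hU : IsOpen U) (hx : x ∈ U) : DifferentiableAt ℝ (detRatioRoot g gb) x := by
  have hdet := differentiableAt_det (hg.differentiableAt hU hx)
  have hdetb := differentiableAt_det (hgb.differentiableAt hU hx)
  have h0 := (hg.nondeg x hx).ne_zero
  have hquot : DifferentiableAt ℝ (fun y => (gb y).det / (g y).det) x := by
    simpa only [div_eq_mul_inv] using hdetb.fun_mul (hdet.fun_inv h0)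
  exact hquot.rpow_const (Or.inl (div_ne_zero (hgb.nondeg x hx).ne_zero h0))

theorem IsProjectiveChange.pd_detRatioRoot (hφ : IsProjectiveChange g gb x φ)
    (hg : IsMetricOn g U) (hgb : IsMetricOn gb U) (hU : IsOpen U) (hx : x ∈ U) (k : n) :
    pd k (detRatioRoot g gb) x = 2 * detRatioRoot g gb x * φ k := by
  have htr : (christoffelMatrix gb x k).trace =
      (christoffelMatrix g x k).trace + (Fintype.card n + 1) * φ k := by
    rw [hφ, trace_add, trace_add, trace_smul, trace_one, trace_vecMulVec, single_one_dotProduct,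
      smul_eq_mul]
    ring
  refine (fderiv_div_rpow_apply (differentiableAt_det (hg.differentiableAt hU hx))
    (differentiableAt_det (hgb.differentiableAt hU hx)) (hg.nondeg x hx).ne_zero
    (hgb.nondeg x hx).ne_zero (hg.pd_det hU hx k) (hgb.pd_det hU hx k) _).trans ?_
  rw [htr, detRatioRoot]
  field_simp
  ring

theorem Lten_eq_smul (g gb : (n → ℝ) → Matrix n n ℝ) (x : n → ℝ) :
    Lten g gb x = detRatioRoot g gb x • ((gb x)⁻¹ * g x) := rfl

theorem mul_Lten (hgb : IsUnit (gb x).det) : gb x * Lten g gb x = detRatioRoot g gb x • g x := by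
  rw [Lten_eq_smul, Matrix.mul_smul, mul_nonsing_inv_cancel_left _ _ hgb]

theorem differentiableAt_Lten (hg : IsMetricOn g U) (hgb : IsMetricOn gb U) (hU : IsOpen U)
    (hx : x ∈ U) : DifferentiableAt ℝ (Lten g gb) x :=
  differentiableAt_matrix_smul (differentiableAt_detRatioRoot hg hgb hU hx)
    (differentiableAt_matrix_mul (hgb.differentiableAt_inv hU hx) (hg.differentiableAt hU hx))

theorem mul_Lten_eq_transpose_mul_left (hg : (g x)ᵀ = g x) (hgb : (gb x)ᵀ = gb x) :
    g x * Lten g gb x = (Lten g gb x)ᵀ * g x := by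
  rw [Lten_eq_smul, transpose_smul, transpose_mul, transpose_nonsing_inv, hg, hgb,
    Matrix.mul_smul, Matrix.smul_mul, mul_assoc]

theorem mul_Lten_eq_transpose_mul_right (hg : (g x)ᵀ = g x) (hgb : (gb x)ᵀ = gb x)
    (hdet : IsUnit (gb x).det) : gb x * Lten g gb x = (Lten g gb x)ᵀ * gb x := by
  have h : (gb x * Lten g gb x)ᵀ = gb x * Lten g gb x := by
    rw [mul_Lten hdet, transpose_smul, hg]
  rw [← h, transpose_mul, hgb]

theorem transpose_vecMulVec_row {A : Matrix n n ℝ} (hA : Aᵀ = A) (u : n → ℝ) (k : n) :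
    (vecMulVec u (A k))ᵀ = A * vecMulVec (Pi.single k 1) u := by
  rw [transpose_vecMulVec, mul_vecMulVec, mulVec_single_one, col, hA]

/-- The vector field `λ` in the equation `∇_k L^i_j = λ^i g_{kj} + δ^i_k λ_j` satisfied by
`L = L(g,ḡ)` when the connections of `g` and `ḡ` differ by a projective change with covector `φ`. -/
def projectiveVector (g gb : (n → ℝ) → Matrix n n ℝ) (x φ : n → ℝ) : n → ℝ :=
  -(detRatioRoot g gb x • (gb x)⁻¹ *ᵥ φ)

theorem mulVec_projectiveVector_right (hgb : IsUnit (gb x).det) :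
    gb x *ᵥ projectiveVector g gb x φ = -(detRatioRoot g gb x • φ) := by
  rw [projectiveVector, mulVec_neg, mulVec_smul, mulVec_mulVec, mul_nonsing_inv _ hgb, one_mulVec]

theorem mulVec_projectiveVector_left (hg : (g x)ᵀ = g x) (hgb : (gb x)ᵀ = gb x) :
    g x *ᵥ projectiveVector g gb x φ = -(φ ᵥ* Lten g gb x) := by
  rw [projectiveVector, mulVec_neg, mulVec_smul, mulVec_mulVec, Lten_eq_smul, vecMul_smul,
    ← mulVec_transpose, transpose_mul, transpose_nonsing_inv, hg, hgb]

theorem IsProjectiveChange.covDeriv_Lten_right (hφ : IsProjectiveChange g gb x φ)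
    (hg : IsMetricOn g U) (hgb : IsMetricOn gb U) (hU : IsOpen U) (hx : x ∈ U) (k : n) :
    covDeriv gb (Lten g gb) x k = vecMulVec (projectiveVector g gb x φ) (g x k)
      + -(Lten g gb x * vecMulVec (Pi.single k 1) φ) := by
  have hdet := hgb.nondeg x hx
  set c := detRatioRoot g gb x with hc
  set E := vecMulVec (Pi.single k 1) φ with hE
  have hgbL : (fun y => gb y * Lten g gb y) =ᶠ[nhds x] fun y => detRatioRoot g gb y • g y :=
    eventually_of_mem (hU.mem_nhds hx) fun y hy => mul_Lten (hgb.nondeg y hy)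
  have hpd : pdMatrix k (fun y => gb y * Lten g gb y) x = (2 * c * φ k) • g x
      + c • (g x * christoffelMatrix g x k + (christoffelMatrix g x k)ᵀ * g x) := by
    rw [pdMatrix, hgbL.fderiv_eq, ← pdMatrix, pdMatrix_smul
      (differentiableAt_detRatioRoot hg hgb hU hx) (hg.differentiableAt hU hx),
      hφ.pd_detRatioRoot hg hgb hU hx, hg.pdMatrix_eq hU hx]
  have hlow : gb x * vecMulVec (projectiveVector g gb x φ) (g x k) = -(c • (Eᵀ * g x)) := by
    rw [mul_vecMulVec, mulVec_projectiveVector_right hdet, neg_vecMulVec, smul_vecMulVec,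
      ← transpose_transpose (vecMulVec φ _), transpose_vecMulVec_row (hg.symm x hx), transpose_mul,
      hg.symm x hx]
  have hcancel : gb x * covDeriv gb (Lten g gb) x k =
      gb x * (vecMulVec (projectiveVector g gb x φ) (g x k) + -(Lten g gb x * E)) := by
    rw [hgb.mul_covDeriv hU hx (differentiableAt_Lten hg hgb hU hx), hpd, mul_Lten hdet, hφ k,
      mul_add (gb x), hlow, mul_neg, ← mul_assoc (gb x), mul_Lten hdet]
    simp only [transpose_add, transpose_smul, transpose_one, Matrix.mul_smul, Matrix.smul_mul,
      mul_add, add_mul, mul_one, one_mul, smul_add, ← hc, ← hE]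
    module
  rw [← nonsing_inv_mul_cancel_left (gb x) (covDeriv gb _ x k) hdet, hcancel,
    nonsing_inv_mul_cancel_left (gb x) _ hdet]

theorem IsProjectiveChange.covDeriv_Lten_left (hφ : IsProjectiveChange g gb x φ)
    (hg : IsMetricOn g U) (hgb : IsMetricOn gb U) (hU : IsOpen U) (hx : x ∈ U) (k : n) :
    covDeriv g (Lten g gb) x k = vecMulVec (projectiveVector g gb x φ) (g x k)
      + vecMulVec (Pi.single k 1) (g x *ᵥ projectiveVector g gb x φ) := by
  have h := hφ.covDeriv_Lten_right hg hgb hU hx k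
  rw [mulVec_projectiveVector_left (hg.symm x hx) (hgb.symm x hx), vecMulVec_neg, ← vecMulVec_mul]
  rw [covDeriv, hφ k] at h
  rw [covDeriv, ← sub_eq_zero, ← sub_eq_zero.mpr h]
  simp only [add_mul, mul_add, Matrix.mul_smul, Matrix.smul_mul, mul_one, one_mul]
  abel

theorem IsProjectiveChange.mul_of_jet (hφ : IsProjectiveChange g gb x φ)
    (hg : IsMetricOn g U) (hgb : IsMetricOn gb U) (hU : IsOpen U) (hx : x ∈ U) {q : ℝ[X]}
    (hFx : F x = aeval (Lten g gb x) q)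
    (hFd : HasFDerivAt F (fderiv ℝ (fun y => aeval (Lten g gb y) q) x) x)
    (hFdet : IsUnit (F x).det) :
    IsProjectiveChange (fun y => g y * F y) (fun y => gb y * F y) x φ := by
  have hL := differentiableAt_Lten hg hgb hU hx
  have hgs := hg.symm x hx
  have hgbs := hgb.symm x hx
  have hgL := mul_Lten_eq_transpose_mul_left hgs hgbs
  have hgbL := mul_Lten_eq_transpose_mul_right hgs hgbs (hgb.nondeg x hx)
  set u := projectiveVector g gb x φ
  have hP : ∀ i j k, polyDeriv (Lten g gb x) q (vecMulVec u (g x k)) i j =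
      polyDeriv (Lten g gb x) q (vecMulVec u (g x j)) i k :=
    polyDeriv_vecMulVec_swap hgs hgL u q
  have hPg : ∀ k, (vecMulVec u (g x k))ᵀ * g x = g x * vecMulVec (Pi.single k 1) (g x *ᵥ u) :=
    fun k => by
      rw [transpose_vecMulVec_row hgs, mul_assoc, vecMulVec_mul, ← mulVec_transpose, hgs]
  have hPgb : ∀ k, (vecMulVec u (g x k))ᵀ * gb x =
      gb x * -(Lten g gb x * vecMulVec (Pi.single k 1) φ) := fun k => by
    rw [transpose_vecMulVec_row hgs, mul_assoc, vecMulVec_mul, ← mulVec_transpose, hgbs,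
      mulVec_projectiveVector_right (hgb.nondeg x hx), mul_neg, ← mul_assoc,
      mul_Lten (hgb.nondeg x hx), vecMulVec_neg, vecMulVec_smul, mul_neg, Matrix.mul_smul,
      Matrix.smul_mul]
  intro k
  rw [hg.christoffelMatrix_mul_of_jet hU hx hL hgL hFx hFd hFdet
      (hφ.covDeriv_Lten_left hg hgb hU hx) hPg hP,
    hgb.christoffelMatrix_mul_of_jet hU hx hL hgbL hFx hFd hFdet
      (hφ.covDeriv_Lten_right hg hgb hU hx) hPgb hP, hφ k]
  abel

end ProjectiveChange

section Geodesics

theorem exists_contDiffOn_integralCurve {E : Type*} [NormedAddCommGroup E] [NormedSpace ℝ E]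
    [CompleteSpace E] {W : Set E} (hW : IsOpen W) {V : E → E}
    (hV : ContDiffOn ℝ (⊤ : ℕ∞) V W) {q : E} (hq : q ∈ W) :
    ∃ ε > 0, ∃ c : ℝ → E, c 0 = q ∧ ContDiffOn ℝ (⊤ : ℕ∞) c (Set.Ioo (-ε) ε) ∧
      ∀ t ∈ Set.Ioo (-ε) ε, c t ∈ W ∧ HasDerivAt c (V (c t)) t := by
  have hVq : ContDiffAt ℝ 1 V q := (hV.contDiffAt (hW.mem_nhds hq)).of_le (by simp)
  obtain ⟨c, hc0, ε₀, hε₀, hc⟩ :=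
    hVq.exists_forall_mem_closedBall_exists_eq_forall_mem_Ioo_hasDerivAt₀ (0 : ℝ)
  simp only [zero_sub, zero_add] at hc
  have hcont : ContinuousAt c 0 := (hc 0 ⟨neg_lt_zero.mpr hε₀, hε₀⟩).continuousAt
  obtain ⟨δ, hδ, hδW⟩ := Metric.mem_nhds_iff.mp
    (hcont.preimage_mem_nhds (hW.mem_nhds (by rwa [hc0])))
  have hcW : ∀ t ∈ Set.Ioo (-min ε₀ δ) (min ε₀ δ), c t ∈ W ∧ HasDerivAt c (V (c t)) t := by
    intro t ht
    have habs := abs_lt.mpr ht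
    exact ⟨hδW (by simpa using habs.trans_le (min_le_right _ _)),
      hc t (abs_lt.mp (habs.trans_le (min_le_left _ _)))⟩
  refine ⟨min ε₀ δ, lt_min hε₀ hδ, c, hc0, contDiffOn_infty.mpr fun m => ?_, hcW⟩
  induction m with
  | zero =>
    exact contDiffOn_zero.mpr fun t ht => (hcW t ht).2.continuousAt.continuousWithinAt
  | succ m ih =>
    rw [Nat.cast_succ, contDiffOn_succ_iff_deriv_of_isOpen isOpen_Ioo]
    refine ⟨fun t ht => (hcW t ht).2.differentiableAt.differentiableWithinAt, by simp, ?_⟩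
    refine ((contDiffOn_infty.mp hV m).comp ih fun t ht => (hcW t ht).1).congr fun t ht => ?_
    exact (hcW t ht).2.deriv

variable {n : Type} [Fintype n] [DecidableEq n] {g : (n → ℝ) → Matrix n n ℝ} {U : Set (n → ℝ)}

theorem IsMetricOn.contDiffOn_christoffel (hg : IsMetricOn g U) (hU : IsOpen U) (i j k : n) :
    ContDiffOn ℝ (⊤ : ℕ∞) (fun x => christoffel g x i j k) U := by
  have hpd : ∀ l a b, ContDiffOn ℝ (⊤ : ℕ∞) (fun x => pd l (fun y => g y a b) x) U := fun l a b =>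
    ((contDiffOn_infty_iff_fderiv_of_isOpen hU).mp (hg.smooth a b)).2.clm_apply contDiffOn_const
  exact contDiffOn_const.mul (ContDiffOn.sum fun m _ =>
    (contDiffOn_nonsing_inv hg.smooth hg.nondeg i m).mul
      (((hpd j m k).add (hpd k m j)).sub (hpd m j k)))

/-- The geodesic spray of `g`: the vector field `(x, v) ↦ (v, -Γ(v, v))` on the tangent bundle
whose integral curves are the affinely parametrised geodesics with their velocities. -/
def geodesicField (g : (n → ℝ) → Matrix n n ℝ) (q : (n → ℝ) × (n → ℝ)) : (n → ℝ) × (n → ℝ) :=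
  (q.2, fun i => -∑ j, ∑ k, christoffel g q.1 i j k * q.2 j * q.2 k)

theorem IsMetricOn.contDiffOn_geodesicField (hg : IsMetricOn g U) (hU : IsOpen U) :
    ContDiffOn ℝ (⊤ : ℕ∞) (geodesicField g) (U ×ˢ Set.univ) := by
  have hsnd : ∀ l : n, ContDiffOn ℝ (⊤ : ℕ∞) (fun q : (n → ℝ) × (n → ℝ) => q.2 l)
      (U ×ˢ Set.univ) := fun l => contDiffOn_pi.mp contDiffOn_snd l
  exact contDiffOn_snd.prodMk (contDiffOn_pi.mpr fun i => (ContDiffOn.sum fun j _ =>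
    ContDiffOn.sum fun k _ => (((hg.contDiffOn_christoffel hU i j k).comp contDiffOn_fst
      fun _ hq => hq.1).mul (hsnd j)).mul (hsnd k)).neg)

theorem hasDerivAt_geodesicField_reparam {c : ℝ → (n → ℝ) × (n → ℝ)} {s : ℝ → ℝ} {t a : ℝ}
    (hc : HasDerivAt c (geodesicField g (c (s t))) (s t)) (hs : HasDerivAt s a t) (i : n) :
    HasDerivAt (fun τ => (c (s τ)).1 i) ((c (s t)).2 i * a) t :=
  HasDerivAt.comp t (h₂ := fun τ => (c τ).1 i) (hasDerivAt_pi.mp hc.fst i) hs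

theorem isPregeodesic_geodesicField_reparam {c : ℝ → (n → ℝ) × (n → ℝ)} {s w : ℝ → ℝ}
    (hc : ∀ t, HasDerivAt c (geodesicField g (c (s t))) (s t)) (hs : ∀ t, HasDerivAt s (w t) t)
    (hw0 : ∀ t, w t ≠ 0) (hw : Differentiable ℝ w) : IsPregeodesic g fun t => (c (s t)).1 := by
  have hvel : ∀ j, deriv (fun τ => (c (s τ)).1 j) = fun t => (c (s t)).2 j * w t := fun j =>
    funext fun t => (hasDerivAt_geodesicField_reparam (hc t) (hs t) j).deriv
  refine ⟨fun t => deriv w t / w t, fun t i => ?_⟩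
  have hacc : HasDerivAt (fun τ => (c (s τ)).2 i * w τ)
      ((geodesicField g (c (s t))).2 i * w t * w t + (c (s t)).2 i * deriv w t) t :=
    HasDerivAt.mul (HasDerivAt.comp t (h₂ := fun τ => (c τ).2 i)
      (hasDerivAt_pi.mp (hc t).snd i) (hs t)) (hw t).hasDerivAt
  have hquad : ∑ j, ∑ k, christoffel g (c (s t)).1 i j k * ((c (s t)).2 j * w t)
      * ((c (s t)).2 k * w t) = -(geodesicField g (c (s t))).2 i * w t * w t := by
    simp only [geodesicField, neg_neg, Finset.sum_mul]
    exact Finset.sum_congr rfl fun j _ => Finset.sum_congr rfl fun k _ => by ring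
  simp only [hvel, hacc.deriv, hquad]
  have := hw0 t
  field_simp
  ring

theorem IsMetricOn.exists_isPregeodesic (hg : IsMetricOn g U) (hU : IsOpen U) {x : n → ℝ}
    (hx : x ∈ U) (v : n → ℝ) :
    ∃ γ : ℝ → n → ℝ, ContDiff ℝ (⊤ : ℕ∞) γ ∧ (∀ t, γ t ∈ U) ∧ IsPregeodesic g γ ∧ γ 0 = x ∧
      ∃ a ≠ 0, ∀ i, deriv (fun τ => γ τ i) 0 = a * v i := by
  obtain ⟨ε, hε, c, hc0, hcs, hc⟩ := exists_contDiffOn_integralCurve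
    (hU.prod isOpen_univ) (hg.contDiffOn_geodesicField hU) (q := (x, v)) ⟨hx, trivial⟩
  -- Pregeodesics are defined on all of `ℝ`, hence the diffeomorphism onto a bounded interval.
  let s : ℝ → ℝ := fun t => ε / 2 * Real.arctan t
  let w : ℝ → ℝ := fun t => ε / 2 * (1 / (1 + t ^ 2))
  have hmem : ∀ t, s t ∈ Set.Ioo (-ε) ε := fun t => by
    have hlower := Real.neg_pi_div_two_lt_arctan t
    have hupper := Real.arctan_lt_pi_div_two t
    have hpi := Real.pi_lt_four
    constructor <;> simp only [s] <;> nlinarith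
  have hs : ∀ t, HasDerivAt s (w t) t := fun t => (Real.hasDerivAt_arctan t).const_mul _
  have hw0 : ∀ t, w t ≠ 0 := fun t => by positivity
  have hw : Differentiable ℝ w := fun t => by
    have : (1 + t ^ 2 : ℝ) ≠ 0 := by positivity
    fun_prop (disch := assumption)
  have hcd : ∀ t, HasDerivAt c (geodesicField g (c (s t))) (s t) := fun t => (hc _ (hmem t)).2
  have hs0 : c (s 0) = (x, v) := by simp only [s, Real.arctan_zero, mul_zero, hc0]
  have hsmooth : ContDiff ℝ (⊤ : ℕ∞) fun t => c (s t) := contDiffOn_univ.mp <|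
    hcs.comp (contDiff_const.mul Real.contDiff_arctan).contDiffOn fun t _ => hmem t
  refine ⟨fun t => (c (s t)).1, contDiff_fst.comp hsmooth, fun t => (hc _ (hmem t)).1.1,
    isPregeodesic_geodesicField_reparam hcd hs hw0 hw, congrArg Prod.fst hs0, w 0, hw0 0,
    fun i => ?_⟩
  rw [(hasDerivAt_geodesicField_reparam (hcd 0) (hs 0) i).deriv, hs0, mul_comm]

theorem GeodEquiv.exists_christoffel_sub_eq {gb : (n → ℝ) → Matrix n n ℝ} (hge : GeodEquiv g gb U)
    (hg : IsMetricOn g U) (hU : IsOpen U) {x : n → ℝ} (hx : x ∈ U) (v : n → ℝ) :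
    ∃ β : ℝ, ∀ i, ∑ j, ∑ k, (christoffel gb x i j k - christoffel g x i j k) * v j * v k
      = β * v i := by
  obtain ⟨γ, hγ, hγU, hpre, hγ0, a, ha, hav⟩ := hg.exists_isPregeodesic hU hx v
  obtain ⟨αb, hαb⟩ := (hge γ hγ hγU).mp hpre
  obtain ⟨α, hα⟩ := hpre
  refine ⟨(αb 0 - α 0) / a, fun i => ?_⟩
  have heq := hα 0 i
  have heqb := hαb 0 i
  have hquad : ∀ h : (n → ℝ) → Matrix n n ℝ,
      ∑ j, ∑ k, christoffel h x i j k * (a * v j) * (a * v k) =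
        a * a * ∑ j, ∑ k, christoffel h x i j k * v j * v k := fun h => by
    simp only [Finset.mul_sum]
    exact Finset.sum_congr rfl fun j _ => Finset.sum_congr rfl fun k _ => by ring
  simp only [hav, hγ0, hquad] at heq heqb
  simp only [sub_mul, Finset.sum_sub_distrib]
  field_simp
  refine mul_left_cancel₀ ha ?_
  linear_combination heqb - heq

section DiagonalProportional

variable {𝕜 m : Type*} [Field 𝕜] [Fintype m] {D : m → m → m → 𝕜}

theorem apply_self_eq_zero_of_diagonal_proportional
    (hD : ∀ v : m → 𝕜, ∃ β : 𝕜, ∀ i, ∑ j, ∑ k, D i j k * v j * v k = β * v i)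
    {i k : m} (hik : i ≠ k) : D i k k = 0 := by
  classical
  obtain ⟨β, hβ⟩ := hD (Pi.single k 1)
  simpa [Pi.single_apply, hik] using hβ i

variable [DecidableEq m]

theorem exists_apply_single_add_single_of_diagonal_proportional
    (hsymm : ∀ i j k, D i j k = D i k j)
    (hD : ∀ v : m → 𝕜, ∃ β : 𝕜, ∀ i, ∑ j, ∑ k, D i j k * v j * v k = β * v i)
    (e : 𝕜) (k l : m) :
    ∃ β : 𝕜, ∀ i, D i k k + e * e * D i l l + 2 * e * D i k l =
      β * ((if i = k then 1 else 0) + e * (if i = l then 1 else 0)) := by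
  obtain ⟨β, hβ⟩ := hD (Pi.single k 1 + e • Pi.single l 1)
  refine ⟨β, fun i => ?_⟩
  have hi := hβ i
  simp only [Pi.add_apply, Pi.smul_apply, Pi.single_apply, smul_eq_mul, mul_add, add_mul,
    Finset.sum_add_distrib, mul_ite, mul_one, mul_zero, ite_mul, zero_mul,
    Finset.sum_ite_eq', Finset.mem_univ, if_true, hsymm i l k] at hi
  simp only [mul_add, mul_ite, mul_one, mul_zero]
  linear_combination hi

theorem apply_eq_of_diagonal_proportional [CharZero 𝕜] (hsymm : ∀ i j k, D i j k = D i k j)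
    (hD : ∀ v : m → 𝕜, ∃ β : 𝕜, ∀ i, ∑ j, ∑ k, D i j k * v j * v k = β * v i)
    (i : m) {k j : m} (hkj : k ≠ j) :
    D i k j = (if i = j then D k k k / 2 else 0) + (if i = k then D j j j / 2 else 0) := by
  -- Comparing `v = e_k + e_j` with `v = e_k - e_j` isolates the mixed terms.
  obtain ⟨β, hβ⟩ := exists_apply_single_add_single_of_diagonal_proportional hsymm hD 1 k j
  obtain ⟨β', hβ'⟩ := exists_apply_single_add_single_of_diagonal_proportional hsymm hD (-1) k j
  have hzero : ∀ {i k}, i ≠ k → D i k k = 0 := apply_self_eq_zero_of_diagonal_proportional hD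
  have hk := hβ k
  have hj := hβ j
  have hk' := hβ' k
  have hj' := hβ' j
  simp only [hkj, hkj.symm, hzero hkj, hzero hkj.symm, if_true, if_false] at hk hj hk' hj'
  rcases eq_or_ne i k with rfl | hik
  · simp only [hkj, if_true, if_false]
    linear_combination (1 / 4) * hk - (1 / 4) * hk' - (1 / 4) * hj - (1 / 4) * hj'
  rcases eq_or_ne i j with rfl | hij
  · simp only [hik, if_true, if_false]
    linear_combination (1 / 4) * hj - (1 / 4) * hj' - (1 / 4) * hk - (1 / 4) * hk'
  · have hi := hβ i
    simp only [hik, hij, hzero hik, hzero hij, if_false] at hi ⊢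
    linear_combination (1 / 2) * hi

theorem exists_eq_of_diagonal_proportional [CharZero 𝕜] (hsymm : ∀ i j k, D i j k = D i k j)
    (hD : ∀ v : m → 𝕜, ∃ β : 𝕜, ∀ i, ∑ j, ∑ k, D i j k * v j * v k = β * v i) :
    ∃ φ : m → 𝕜, ∀ i k j, D i k j = (if i = j then φ k else 0) + (if i = k then φ j else 0) := by
  -- The value of `φ_k` is forced by the case `i = k = j`.
  refine ⟨fun k => D k k k / 2, fun i k j => ?_⟩
  rcases eq_or_ne k j with rfl | hkj
  · rcases eq_or_ne i k with rfl | hik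
    · simp only [if_true, add_halves]
    · simp only [hik, if_false, add_zero, apply_self_eq_zero_of_diagonal_proportional hD hik]
  · exact apply_eq_of_diagonal_proportional hsymm hD i hkj

end DiagonalProportional

variable {gb : (n → ℝ) → Matrix n n ℝ} {x φ : n → ℝ}

theorem isProjectiveChange_iff : IsProjectiveChange g gb x φ ↔ ∀ i k j,
    christoffel gb x i k j - christoffel g x i k j =
      (if i = j then φ k else 0) + (if i = k then φ j else 0) := by
  have hentry : ∀ i k j, christoffelMatrix gb x k i j = (christoffelMatrix g x k +
      φ k • (1 : Matrix n n ℝ) + vecMulVec (Pi.single k 1) φ) i j ↔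
      christoffel gb x i k j - christoffel g x i k j =
        (if i = j then φ k else 0) + (if i = k then φ j else 0) := fun i k j => by
    simp only [christoffelMatrix, of_apply, Matrix.add_apply, Matrix.smul_apply, Matrix.one_apply,
      vecMulVec_apply, Pi.single_apply, smul_eq_mul, mul_ite, mul_one, mul_zero, ite_mul, one_mul,
      zero_mul, sub_eq_iff_eq_add', add_assoc]
  exact ⟨fun h i k j => (hentry i k j).mp (congrFun (congrFun (h k) i) j),
    fun h k => Matrix.ext fun i j => (hentry i k j).mpr (h i k j)⟩

theorem IsProjectiveChange.symm (hφ : IsProjectiveChange g gb x φ) :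
    IsProjectiveChange gb g x (-φ) := fun k => by
  rw [hφ k, vecMulVec_neg, Pi.neg_apply, neg_smul]
  abel

theorem GeodEquiv.exists_isProjectiveChange (hge : GeodEquiv g gb U) (hg : IsMetricOn g U)
    (hgb : IsMetricOn gb U) (hU : IsOpen U) (hx : x ∈ U) : ∃ φ, IsProjectiveChange g gb x φ := by
  simp only [isProjectiveChange_iff]
  exact exists_eq_of_diagonal_proportional
    (fun i j k => by rw [hg.christoffel_swap hU hx i j k, hgb.christoffel_swap hU hx i j k])
    (hge.exists_christoffel_sub_eq hg hU hx)

theorem IsPregeodesic.of_isProjectiveChange {γ φ : ℝ → n → ℝ} (hγ : IsPregeodesic g γ)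
    (hφ : ∀ t, IsProjectiveChange g gb (γ t) (φ t)) : IsPregeodesic gb γ := by
  obtain ⟨α, hα⟩ := hγ
  refine ⟨fun t => α t + 2 * ∑ k, φ t k * deriv (fun τ => γ τ k) t, fun t i => ?_⟩
  have hentry : ∀ j k, christoffel gb (γ t) i j k = christoffel g (γ t) i j k
      + ((if i = k then φ t j else 0) + (if i = j then φ t k else 0)) := fun j k =>
    sub_eq_iff_eq_add'.mp (isProjectiveChange_iff.mp (hφ t) i j k)
  simp only [hentry, add_mul, Finset.sum_add_distrib, ite_mul, zero_mul, Finset.sum_ite_eq,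
    Finset.mem_univ, if_true, Finset.sum_ite_irrel, Finset.sum_const_zero, ← hα t i, two_mul,
    Finset.sum_mul, add_assoc]
  congr 3
  exact Finset.sum_congr rfl fun k _ => by ring

theorem geodEquiv_of_isProjectiveChange (h : ∀ x ∈ U, ∃ φ, IsProjectiveChange g gb x φ) :
    GeodEquiv g gb U := fun γ _ hγU => by
  choose φ hφ using fun t => h (γ t) (hγU t)
  exact ⟨fun hγ => hγ.of_isProjectiveChange hφ,
    fun hγ => hγ.of_isProjectiveChange fun t => (hφ t).symm⟩

end Geodesics

theorem stmt5_general {n : Type} [Fintype n] [DecidableEq n] (U : Set (n → ℝ)) (hU : IsOpen U)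
    (g gb : (n → ℝ) → Matrix n n ℝ) (hg : IsMetricOn g U) (hgb : IsMetricOn gb U)
    (hge : GeodEquiv g gb U) (L : (n → ℝ) → Matrix n n ℝ) (hL : L = Lten g gb)
    (K : Set ℂ) (f : ℂ → ℂ) (hspec : SpectrumIn L U K)
    (hf0 : ∀ x ∈ U, ∀ z ∈ spectrum ℂ ((L x).map (algebraMap ℝ ℂ)), f z ≠ 0)
    (FL : (n → ℝ) → Matrix n n ℝ) (hFL : RepFunOfL L U K f FL) :
    GeodEquiv (fun x => g x * FL x) (fun x => gb x * FL x) U := by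
  subst hL
  obtain ⟨p, hp, hlim⟩ := hFL
  refine geodEquiv_of_isProjectiveChange fun x hx => ?_
  obtain ⟨φ, hφ⟩ := hge.exists_isProjectiveChange hg hgb hU hx
  have hlim' : ∀ᶠ y in nhds x, Tendsto (fun m => aeval (Lten g gb y) (p m)) atTop (nhds (FL y)) :=
    eventually_of_mem (hU.mem_nhds hx) fun y hy =>
      tendsto_pi_nhds.mpr fun i => tendsto_pi_nhds.mpr (hlim y hy i)
  obtain ⟨q, hFx, hFd, hqf⟩ := exists_hasFDerivAt_matrix_aeval_of_tendsto hp
    (differentiableAt_Lten hg hgb hU hx) (hspec x hx) hlim'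
  have hdet : IsUnit (FL x).det := hFx ▸ isUnit_det_aeval fun z hz => hqf z hz ▸ hf0 x hx z hz
  exact ⟨φ, hφ.mul_of_jet hg hgb hU hx hFx hFd hdet⟩

theorem stmt5 {n : ℕ} (U : Set (Fin n → ℝ)) (hU : IsOpen U)
    (g gb : (Fin n → ℝ) → Matrix (Fin n) (Fin n) ℝ)
    (hg : IsMetricOn g U) (hgb : IsMetricOn gb U)
    (hge : GeodEquiv g gb U)
    (L : (Fin n → ℝ) → Matrix (Fin n) (Fin n) ℝ) (hL : L = Lten g gb)
    (K : Set ℂ) (f : ℂ → ℂ)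
    (hadm : AdmissibleFun K f) (hspec : SpectrumIn L U K)
    -- `0 ∉ f(Spectrum L(x))` for every `x ∈ U`
    (hf0 : ∀ x ∈ U, ∀ z ∈ spectrum ℂ ((L x).map (algebraMap ℝ ℂ)), f z ≠ 0)
    -- `FL = f(L)`
    (FL : (Fin n → ℝ) → Matrix (Fin n) (Fin n) ℝ)
    (hFL : RepFunOfL L U K f FL) :
    -- then `g_f = g·f(L)` and `ḡ_f = ḡ·f(L)` are geodesically equivalent
    GeodEquiv (fun x => g x * FL x) (fun x => gb x * FL x) U :=
  stmt5_general U hU g gb hg hgb hge L hL K f hspec hf0 FL hFL
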